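/- Excited energy is attained by a central configuration: let α > 2 and ω > 0. The infimum E*(ω) = inf{E_ω(x) : K_ω(x) = 0} is attained at some configuration q with K_ω(q) = 0, and any such minimizer is a central configuration: ω² ∇I(q) − 2 ∇U(q) = 0. (Equivalently, the Lagrange multiplier in −∇U(q) = λ ∇K_ω(q) equals λ = −1/(2+α).) -/

import Mathlib

/- STATEMENT 10: for α > 2 the excited energy E*(ω) is attained, and every minimizer is
a central configuration: ω² ∇I(q) − 2 ∇U(q) = 0. -/

namespace NBodyPaper

open Real

noncomputable section

abbrev E3 := EuclideanSpace ℝ (Fin 3)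

variable {N : ℕ}

/-- The α-homogeneous potential `U(x) = -∑_{i<j} m_i m_j / |x_i - x_j|^α`. -/
def pot (α : ℝ) (m : Fin N → ℝ) (q : Fin N → E3) : ℝ :=
  -∑ i : Fin N, ∑ j ∈ Finset.univ.filter (fun j => i < j), m i * m j / ‖q i - q j‖ ^ α

/-- Moment of inertia `I(x) = ∑ m_i |x_i|²`. -/
def inertia (m : Fin N → ℝ) (q : Fin N → E3) : ℝ := ∑ i, m i * ‖q i‖ ^ 2

/-- Collision-free configuration. -/
def OffDiag (q : Fin N → E3) : Prop := ∀ i j, i ≠ j → q i ≠ q j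

/-- Center of mass at the origin. -/
def comZero (m : Fin N → ℝ) (q : Fin N → E3) : Prop := ∑ i, m i • q i = 0

/-- The threshold function `K_ω(x) = ω² I(x) + α U(x)`. -/
def Kfun (α : ℝ) (m : Fin N → ℝ) (ω : ℝ) (q : Fin N → E3) : ℝ :=
  ω ^ 2 * inertia m q + α * pot α m q

/-- `E_ω(x) = (ω²/2) I(x) + U(x)`. -/
def Eomega (α : ℝ) (m : Fin N → ℝ) (ω : ℝ) (q : Fin N → E3) : ℝ :=
  ω ^ 2 / 2 * inertia m q + pot α m q

/-- The excited energy `E*(ω) = inf { E_ω(x) : K_ω(x) = 0 }`, the infimum taken over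
collision-free configurations with center of mass zero. -/
def Estar (α : ℝ) (m : Fin N → ℝ) (ω : ℝ) : ℝ :=
  sInf {e : ℝ | ∃ q : Fin N → E3, OffDiag q ∧ comZero m q ∧ Kfun α m ω q = 0 ∧ e = Eomega α m ω q}

/-- The gradient of `U` with respect to the position of the `i`-th body:
`∇_i U(q) = α ∑_{j≠i} m_i m_j (q_i − q_j)/|q_i − q_j|^{α+2}`. -/
def gradU (α : ℝ) (m : Fin N → ℝ) (q : Fin N → E3) (i : Fin N) : E3 :=
  α • ∑ j ∈ Finset.univ.erase i, (m i * m j / ‖q i - q j‖ ^ (α + 2)) • (q i - q j)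

/-- The gradient of `I` with respect to the position of the `i`-th body: `∇_i I(q) = 2 m_i q_i`. -/
def gradI (m : Fin N → ℝ) (q : Fin N → E3) (i : Fin N) : E3 := (2 * m i) • q i

/- Write `A = (ω² / 2) I - U`, which blows up both at collisions and at infinity, so it has a
collision-free minimizer. A minimizer is a central configuration; pairing the equation
`ω² ∇I = 2 ∇U` with the infinitesimal dilation and with the infinitesimal translations gives
`K_ω = 0` and center of mass zero for free, by Euler's identity and Newton's third law. Finally
`(α - 2) A = (α + 2) E_ω - 2 K_ω`, so for `α > 2` minimizing `E_ω` on `{K_ω = 0}` is the same as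
minimizing `A` there. -/

/-- The function `A = (ω² / 2) I - U`, whose critical points are the central configurations. -/
def amendedPot (α : ℝ) (m : Fin N → ℝ) (ω : ℝ) (q : Fin N → E3) : ℝ :=
  ω ^ 2 / 2 * inertia m q - pot α m q

/-- Central configurations of frequency `ω`, i.e. `ω² ∇I(q) = 2 ∇U(q)` body by body. Collisions are
not excluded: a colliding pair contributes `0` to `gradU`. -/
def IsCentralConfig (α : ℝ) (m : Fin N → ℝ) (ω : ℝ) (q : Fin N → E3) : Prop :=
  ∀ i, ω ^ 2 • gradI m q i - (2 : ℝ) • gradU α m q i = 0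

section InnerProductSpace

variable {E : Type*} [NormedAddCommGroup E] [InnerProductSpace ℝ E]

lemma hasFDerivAt_norm_rpow_of_ne_zero (β : ℝ) {x : E} (hx : x ≠ 0) :
    HasFDerivAt (fun y : E => ‖y‖ ^ β) ((β * ‖x‖ ^ (β - 2)) • innerSL ℝ x) x := by
  have sq_rpow (y : E) (γ : ℝ) : (‖y‖ ^ 2) ^ γ = ‖y‖ ^ (2 * γ) := by
    rw [← Real.rpow_two, Real.rpow_mul (norm_nonneg y)]
  have h := (hasStrictFDerivAt_norm_sq x).hasFDerivAt.rpow_const (p := β / 2)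
    (Or.inl (pow_ne_zero 2 (norm_ne_zero_iff.2 hx)))
  simp only [sq_rpow, mul_div_cancel₀ β two_ne_zero] at h
  refine h.congr_fderiv ?_
  rw [mul_sub, mul_div_cancel₀ β two_ne_zero, mul_one, ← Nat.cast_smul_eq_nsmul ℝ, smul_smul]
  congr 1
  push_cast
  ring

/-- Summation by parts for the weighted Laplacian of a complete graph. -/
lemma sum_inner_sum_erase_smul_sub {ι : Type*} [LinearOrder ι] [Fintype ι]
    [LocallyFiniteOrderTop ι] [LocallyFiniteOrderBot ι] {c : ι → ι → ℝ}
    (hc : ∀ i j, c i j = c j i) (x w : ι → E) :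
    ∑ i, inner ℝ (∑ j ∈ Finset.univ.erase i, c i j • (x i - x j)) (w i) =
      ∑ i, ∑ j > i, c i j * inner ℝ (x i - x j) (w i - w j) := by
  have hpair (i j : ι) : c i j * inner ℝ (x i - x j) (w i - w j) =
      c i j * inner ℝ (x i - x j) (w i) + c j i * inner ℝ (x j - x i) (w j) := by
    rw [hc j i, ← neg_sub (x i) (x j), inner_neg_left, inner_sub_right]
    ring
  simp only [hpair]
  rw [Finset.sum_sum_Ioi_add_eq_sum_sum_off_diag fun j i => c i j * inner ℝ (x i - x j) (w i)]
  simp only [sum_inner, real_inner_smul_left, Finset.compl_singleton]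

end InnerProductSpace

section Gradients

variable {α ω : ℝ} {m : Fin N → ℝ} {q : Fin N → E3}

lemma OffDiag.sub_ne_zero (hq : OffDiag q) {i j : Fin N} (hij : i ≠ j) : q i - q j ≠ 0 :=
  _root_.sub_ne_zero.2 (hq i j hij)

lemma OffDiag.norm_sub_pos (hq : OffDiag q) {i j : Fin N} (hij : i ≠ j) : 0 < ‖q i - q j‖ :=
  norm_pos_iff.2 (hq.sub_ne_zero hij)

lemma sum_inner_gradU (α : ℝ) (m : Fin N → ℝ) (q w : Fin N → E3) :
    ∑ i, inner ℝ (gradU α m q i) (w i) = α * ∑ i, ∑ j > i,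
      m i * m j / ‖q i - q j‖ ^ (α + 2) * inner ℝ (q i - q j) (w i - w j) := by
  have hsymm (i j : Fin N) :
      m i * m j / ‖q i - q j‖ ^ (α + 2) = m j * m i / ‖q j - q i‖ ^ (α + 2) := by
    rw [mul_comm, norm_sub_rev]
  rw [← sum_inner_sum_erase_smul_sub hsymm q w]
  simp only [gradU, real_inner_smul_left, Finset.mul_sum]

lemma sum_inner_gradI_self (m : Fin N → ℝ) (q : Fin N → E3) :
    ∑ i, inner ℝ (gradI m q i) (q i) = 2 * inertia m q := by
  simp only [gradI, inertia, real_inner_smul_left, real_inner_self_eq_norm_sq, Finset.mul_sum,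
    mul_assoc]

lemma sum_inner_gradU_self (α : ℝ) (m : Fin N → ℝ) (hq : OffDiag q) :
    ∑ i, inner ℝ (gradU α m q i) (q i) = -α * pot α m q := by
  rw [sum_inner_gradU, pot, neg_mul_neg]
  simp only [Finset.filter_lt_eq_Ioi]
  congr 1
  refine Finset.sum_congr rfl fun i _ => Finset.sum_congr rfl fun j hj => ?_
  have hd := hq.norm_sub_pos (Finset.mem_Ioi.1 hj).ne
  rw [real_inner_self_eq_norm_sq, Real.rpow_add hd, Real.rpow_two]
  field_simp

lemma sum_gradU (α : ℝ) (m : Fin N → ℝ) (q : Fin N → E3) : ∑ i, gradU α m q i = 0 := by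
  refine ext_inner_right ℝ fun v => ?_
  simp [sum_inner, sum_inner_gradU α m q fun _ => v]

lemma IsCentralConfig.Kfun_eq_zero (h : IsCentralConfig α m ω q) (hq : OffDiag q) :
    Kfun α m ω q = 0 := by
  have hpaired : ∑ i, inner ℝ (ω ^ 2 • gradI m q i - (2 : ℝ) • gradU α m q i) (q i) = 0 :=
    Finset.sum_eq_zero fun i _ => by rw [h i, inner_zero_left]
  simp only [inner_sub_left, real_inner_smul_left, Finset.sum_sub_distrib, ← Finset.mul_sum,
    sum_inner_gradI_self, sum_inner_gradU_self α m hq] at hpaired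
  rw [Kfun]
  linarith

lemma IsCentralConfig.comZero (h : IsCentralConfig α m ω q) (hω : ω ≠ 0) : comZero m q := by
  have hsum : ∑ i, (ω ^ 2 • gradI m q i - (2 : ℝ) • gradU α m q i) = 0 :=
    Finset.sum_eq_zero fun i _ => h i
  simp only [Finset.sum_sub_distrib, ← Finset.smul_sum, sum_gradU, smul_zero, sub_zero, gradI,
    mul_smul] at hsum
  simpa [NBodyPaper.comZero, hω] using hsum

lemma hasLineDerivAt_inertia (m : Fin N → ℝ) (q w : Fin N → E3) :
    HasLineDerivAt ℝ (inertia m) (∑ i, inner ℝ (gradI m q i) (w i)) q w := by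
  refine HasDerivAt.fun_sum fun i _ => ?_
  have hline : HasDerivAt (fun t : ℝ => (q + t • w) i) (w i) 0 := by
    simpa using ((hasDerivAt_id (0 : ℝ)).smul_const (w i)).const_add (q i)
  refine (hline.norm_sq.const_mul (m i)).congr_deriv ?_
  simp only [gradI, zero_smul, add_zero, real_inner_smul_left]
  ring

lemma OffDiag.hasLineDerivAt_div_norm_sub_rpow (hq : OffDiag q) (α c : ℝ) {i j : Fin N}
    (hij : i ≠ j) (w : Fin N → E3) :
    HasLineDerivAt ℝ (fun p : Fin N → E3 => c / ‖p i - p j‖ ^ α)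
      (-(α * (c / ‖q i - q j‖ ^ (α + 2) * inner ℝ (q i - q j) (w i - w j)))) q w := by
  have h := ((hasFDerivAt_norm_rpow_of_ne_zero (-α) (hq.sub_ne_zero hij)).const_mul
    c).hasLineDerivAt (w i - w j)
  have hline (t : ℝ) : (q + t • w) i - (q + t • w) j = q i - q j + t • (w i - w j) := by
    simp only [Pi.add_apply, Pi.smul_apply, smul_sub, add_sub_add_comm]
  have hpow : ‖q i - q j‖ ^ (-α - 2) = (‖q i - q j‖ ^ (α + 2))⁻¹ := by
    rw [← Real.rpow_neg (norm_nonneg _), neg_add']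
  simp only [HasLineDerivAt, Real.rpow_neg (norm_nonneg _), ← div_eq_mul_inv] at h
  simp only [HasLineDerivAt, hline]
  refine h.congr_deriv ?_
  simp only [smul_apply, innerSL_apply_apply, smul_eq_mul, hpow]
  ring

lemma OffDiag.hasLineDerivAt_pot (hq : OffDiag q) (α : ℝ) (m : Fin N → ℝ) (w : Fin N → E3) :
    HasLineDerivAt ℝ (pot α m) (∑ i, inner ℝ (gradU α m q i) (w i)) q w := by
  have h := HasDerivAt.fun_neg <| HasDerivAt.fun_sum (u := Finset.univ) fun i _ =>
    HasDerivAt.fun_sum (u := Finset.univ.filter (i < ·)) fun j hj =>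
      hq.hasLineDerivAt_div_norm_sub_rpow α (m i * m j) (Finset.mem_filter.1 hj).2.ne w
  refine h.congr_deriv ?_
  simp only [Finset.sum_neg_distrib, neg_neg, ← Finset.mul_sum, Finset.filter_lt_eq_Ioi,
    sum_inner_gradU]

lemma OffDiag.hasLineDerivAt_amendedPot (hq : OffDiag q) (α : ℝ) (m : Fin N → ℝ) (ω : ℝ)
    (w : Fin N → E3) :
    HasLineDerivAt ℝ (amendedPot α m ω)
      (∑ i, inner ℝ ((ω ^ 2 / 2) • gradI m q i - gradU α m q i) (w i)) q w := by
  refine (((hasLineDerivAt_inertia m q w).const_mul (ω ^ 2 / 2)).sub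
    (hq.hasLineDerivAt_pot α m w)).congr_deriv ?_
  simp only [inner_sub_left, real_inner_smul_left, Finset.sum_sub_distrib, Finset.mul_sum]

lemma isCentralConfig_of_isLocalMin (hq : OffDiag q) (hmin : IsLocalMin (amendedPot α m ω) q) :
    IsCentralConfig α m ω q := by
  set g : Fin N → E3 := fun i => (ω ^ 2 / 2) • gradI m q i - gradU α m q i with hg
  have hsum : ∑ i, ‖g i‖ ^ 2 = 0 := by
    simpa only [← real_inner_self_eq_norm_sq] using
      hmin.hasLineDerivAt_eq_zero (hq.hasLineDerivAt_amendedPot α m ω g)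
  intro i
  have hgi : g i = 0 := by
    simpa using (Finset.sum_eq_zero_iff_of_nonneg fun i _ => sq_nonneg ‖g i‖).1 hsum i
  calc ω ^ 2 • gradI m q i - (2 : ℝ) • gradU α m q i = (2 : ℝ) • g i := by
        rw [hg, smul_sub, smul_smul, mul_div_cancel₀ _ two_ne_zero]
    _ = 0 := by rw [hgi, smul_zero]

end Gradients

section Minimization

variable {α ω : ℝ} {m : Fin N → ℝ} {q : Fin N → E3}

lemma isOpen_setOf_offDiag : IsOpen {q : Fin N → E3 | OffDiag q} := by
  simp only [OffDiag, Set.ofPred_forall]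
  exact isOpen_iInter_of_finite fun i => isOpen_iInter_of_finite fun j =>
    isOpen_iInter_of_finite fun _ => isOpen_ne_fun (continuous_apply i) (continuous_apply j)

lemma exists_offDiag (N : ℕ) : ∃ q : Fin N → E3, OffDiag q :=
  ⟨fun i => Infinite.natEmbedding E3 i, fun _ _ hij h =>
    hij (Fin.val_injective ((Infinite.natEmbedding E3).injective h))⟩

lemma continuousOn_amendedPot (α : ℝ) (m : Fin N → ℝ) (ω : ℝ) :
    ContinuousOn (amendedPot α m ω) {q | OffDiag q} := by
  unfold amendedPot inertia pot
  refine ContinuousOn.sub (by fun_prop) (ContinuousOn.neg ?_)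
  refine continuousOn_finsetSum _ fun i _ => continuousOn_finsetSum _ fun j hj => ?_
  have hd (q : Fin N → E3) (hq : OffDiag q) : 0 < ‖q i - q j‖ :=
    hq.norm_sub_pos (Finset.mem_filter.1 hj).2.ne
  exact continuousOn_const.div
    (ContinuousOn.rpow_const (by fun_prop) fun q hq => Or.inl (hd q hq).ne')
    fun q hq => (Real.rpow_pos_of_pos (hd q hq) α).ne'

lemma inertia_nonneg (hm : ∀ i, 0 ≤ m i) (q : Fin N → E3) : 0 ≤ inertia m q :=
  Finset.sum_nonneg fun i _ => mul_nonneg (hm i) (sq_nonneg _)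

lemma mul_norm_sq_le_inertia (hm : ∀ i, 0 ≤ m i) (q : Fin N → E3) (i : Fin N) :
    m i * ‖q i‖ ^ 2 ≤ inertia m q :=
  Finset.single_le_sum (f := fun i => m i * ‖q i‖ ^ 2)
    (fun i _ => mul_nonneg (hm i) (sq_nonneg _)) (Finset.mem_univ i)

lemma mul_div_norm_sub_rpow_nonneg (α : ℝ) (hm : ∀ i, 0 ≤ m i) (q : Fin N → E3) (i j : Fin N) :
    0 ≤ m i * m j / ‖q i - q j‖ ^ α :=
  div_nonneg (mul_nonneg (hm i) (hm j)) (Real.rpow_nonneg (norm_nonneg _) _)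

lemma pot_nonpos (α : ℝ) (hm : ∀ i, 0 ≤ m i) (q : Fin N → E3) : pot α m q ≤ 0 :=
  neg_nonpos.2 <| Finset.sum_nonneg fun i _ => Finset.sum_nonneg fun j _ =>
    mul_div_norm_sub_rpow_nonneg α hm q i j

lemma mul_div_norm_sub_rpow_le_neg_pot (α : ℝ) (hm : ∀ i, 0 ≤ m i) (q : Fin N → E3)
    {i j : Fin N} (hij : i ≠ j) : m i * m j / ‖q i - q j‖ ^ α ≤ -pot α m q := by
  wlog hlt : i < j generalizing i j
  · rw [mul_comm, norm_sub_rev]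
    exact this hij.symm (hij.lt_or_gt.resolve_left hlt)
  have hnonneg := mul_div_norm_sub_rpow_nonneg α hm q
  calc m i * m j / ‖q i - q j‖ ^ α
      ≤ ∑ b ∈ Finset.univ.filter (i < ·), m i * m b / ‖q i - q b‖ ^ α :=
        Finset.single_le_sum (f := fun b => m i * m b / ‖q i - q b‖ ^ α)
          (fun b _ => hnonneg i b) (by simpa using hlt)
    _ ≤ ∑ a, ∑ b ∈ Finset.univ.filter (a < ·), m a * m b / ‖q a - q b‖ ^ α :=
        Finset.single_le_sum
          (f := fun a => ∑ b ∈ Finset.univ.filter (a < ·), m a * m b / ‖q a - q b‖ ^ α)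
          (fun a _ => Finset.sum_nonneg fun b _ => hnonneg a b) (Finset.mem_univ i)
    _ = -pot α m q := (neg_neg _).symm

/-- The configurations on which each single summand of `amendedPot` is at most `C`. The condition on
the potential is cleared of denominators, so that it is closed and, for positive masses, excludes
collisions. -/
def boundedConfigs (α : ℝ) (m : Fin N → ℝ) (ω C : ℝ) : Set (Fin N → E3) :=
  {q | (∀ i, ω ^ 2 / 2 * (m i * ‖q i‖ ^ 2) ≤ C) ∧
    ∀ i j, i ≠ j → m i * m j ≤ C * ‖q i - q j‖ ^ α}

lemma OffDiag.mem_boundedConfigs (hq : OffDiag q) (hm : ∀ i, 0 ≤ m i) {C : ℝ}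
    (hC : amendedPot α m ω q ≤ C) : q ∈ boundedConfigs α m ω C := by
  rw [amendedPot] at hC
  refine ⟨fun i => ?_, fun i j hij => ?_⟩
  · calc ω ^ 2 / 2 * (m i * ‖q i‖ ^ 2) ≤ ω ^ 2 / 2 * inertia m q := by
          gcongr
          exact mul_norm_sq_le_inertia hm q i
      _ ≤ C := by linarith [pot_nonpos α hm q]
  · rw [← div_le_iff₀ (Real.rpow_pos_of_pos (hq.norm_sub_pos hij) α)]
    have hI : 0 ≤ ω ^ 2 / 2 * inertia m q := mul_nonneg (by positivity) (inertia_nonneg hm q)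
    linarith [mul_div_norm_sub_rpow_le_neg_pot α hm q hij]

lemma offDiag_of_mem_boundedConfigs (hα : α ≠ 0) (hm : ∀ i, 0 < m i) {C : ℝ}
    (hq : q ∈ boundedConfigs α m ω C) : OffDiag q := by
  intro i j hij heq
  have hle := hq.2 i j hij
  rw [heq, sub_self, norm_zero, Real.zero_rpow hα, mul_zero] at hle
  exact hle.not_gt (mul_pos (hm i) (hm j))

lemma isCompact_boundedConfigs (hα : 0 ≤ α) (hω : ω ≠ 0) (hm : ∀ i, 0 < m i) (C : ℝ) :
    IsCompact (boundedConfigs α m ω C) := by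
  refine Metric.isCompact_of_isClosed_isBounded ?_ ?_
  · simp only [boundedConfigs, Set.ofPred_and, Set.ofPred_forall]
    refine (isClosed_iInter fun i => isClosed_le (by fun_prop) continuous_const).inter
      (isClosed_iInter fun i => isClosed_iInter fun j => isClosed_iInter fun _ =>
        isClosed_le continuous_const (continuous_const.mul ?_))
    exact Continuous.rpow_const (by fun_prop) fun _ => Or.inr hα
  · refine (Bornology.IsBounded.pi fun i =>
      Metric.isBounded_closedBall (x := (0 : E3)) (r := √(C / (ω ^ 2 / 2 * m i)))).subset ?_
    intro q hq i _
    have hpos : 0 < ω ^ 2 / 2 * m i := mul_pos (by positivity) (hm i)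
    rw [mem_closedBall_zero_iff]
    refine Real.le_sqrt_of_sq_le ((le_div_iff₀' hpos).2 ?_)
    rw [mul_assoc]
    exact hq.1 i

lemma exists_offDiag_isMinOn_amendedPot (hα : 0 < α) (hω : ω ≠ 0) (hm : ∀ i, 0 < m i) :
    ∃ q, OffDiag q ∧ IsMinOn (amendedPot α m ω) {q | OffDiag q} q := by
  obtain ⟨x, hx⟩ := exists_offDiag N
  set B := boundedConfigs α m ω (amendedPot α m ω x)
  have hB (p : Fin N → E3) (hp : OffDiag p) (hle : amendedPot α m ω p ≤ amendedPot α m ω x) :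
      p ∈ B := hp.mem_boundedConfigs (fun i => (hm i).le) hle
  have hBsub : B ⊆ {q | OffDiag q} := fun _ hq => offDiag_of_mem_boundedConfigs hα.ne' hm hq
  obtain ⟨q, hqB, hq⟩ := (isCompact_boundedConfigs hα.le hω hm _).exists_isMinOn
    ⟨x, hB x hx le_rfl⟩ ((continuousOn_amendedPot α m ω).mono hBsub)
  refine ⟨q, hBsub hqB, fun p hp => ?_⟩
  rcases le_total (amendedPot α m ω p) (amendedPot α m ω x) with hle | hge
  · exact hq (hB p hp hle)
  · exact (hq (hB x hx le_rfl)).trans hge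

lemma isCentralConfig_of_isMinOn (hq : OffDiag q)
    (hmin : IsMinOn (amendedPot α m ω) {q | OffDiag q} q) : IsCentralConfig α m ω q :=
  isCentralConfig_of_isLocalMin hq (hmin.isLocalMin (isOpen_setOf_offDiag.mem_nhds hq))

lemma sub_two_mul_amendedPot (α : ℝ) (m : Fin N → ℝ) (ω : ℝ) (q : Fin N → E3) :
    (α - 2) * amendedPot α m ω q = (α + 2) * Eomega α m ω q - 2 * Kfun α m ω q := by
  rw [amendedPot, Eomega, Kfun]
  ring

lemma amendedPot_le_iff_Eomega_le (hα : 2 < α) {p : Fin N → E3} (hp : Kfun α m ω p = 0)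
    (hq : Kfun α m ω q = 0) :
    amendedPot α m ω p ≤ amendedPot α m ω q ↔ Eomega α m ω p ≤ Eomega α m ω q := by
  rw [← mul_le_mul_iff_right₀ (sub_pos.2 hα), sub_two_mul_amendedPot, sub_two_mul_amendedPot, hp,
    hq, sub_le_sub_iff_right, mul_le_mul_iff_right₀ (by linarith)]

end Minimization

/-- **The excited energy is attained by a central configuration** (`α > 2`, `ω > 0`):
the infimum defining `E*(ω)` is attained, and any minimizer `q` satisfies
`ω² ∇I(q) − 2 ∇U(q) = 0`, i.e. it is a central configuration. -/
theorem excited_energy_attained_central_config {N : ℕ} (hN : 2 ≤ N)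
    (α ω : ℝ) (hα : 2 < α) (hω : 0 < ω) (m : Fin N → ℝ) (hm : ∀ i, 0 < m i) :
    (∃ q : Fin N → E3, OffDiag q ∧ comZero m q ∧ Kfun α m ω q = 0 ∧
      Eomega α m ω q = Estar α m ω) ∧
    (∀ q : Fin N → E3, OffDiag q → comZero m q → Kfun α m ω q = 0 →
      Eomega α m ω q = Estar α m ω →
      ∀ i, ω ^ 2 • gradI m q i - (2 : ℝ) • gradU α m q i = 0) := by
  obtain ⟨q₀, hq₀, hmin⟩ := exists_offDiag_isMinOn_amendedPot (two_pos.trans hα) hω.ne' hm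
  have hcentral := isCentralConfig_of_isMinOn hq₀ hmin
  have hK₀ := hcentral.Kfun_eq_zero hq₀
  have hc₀ := hcentral.comZero hω.ne'
  have hE₀ : Eomega α m ω q₀ = Estar α m ω := by
    refine Eq.symm (IsLeast.csInf_eq ⟨⟨q₀, hq₀, hc₀, hK₀, rfl⟩, ?_⟩)
    rintro _ ⟨p, hp, -, hK, rfl⟩
    exact (amendedPot_le_iff_Eomega_le hα hK₀ hK).1 (hmin hp)
  refine ⟨⟨q₀, hq₀, hc₀, hK₀, hE₀⟩, fun q hq _ hK hE => ?_⟩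
  have hle : amendedPot α m ω q ≤ amendedPot α m ω q₀ :=
    (amendedPot_le_iff_Eomega_le hα hK hK₀).2 (hE.trans hE₀.symm).le
  exact isCentralConfig_of_isMinOn hq fun p hp => hle.trans (hmin hp)

end
end NBodyPaper
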